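/- Let n ≥ 3. There is a constant C depending only on n such that for every Schwartz function ψ on ℝⁿ, the convolution of ψ with the Riesz kernel |x|^{2−n} satisfies ‖ ∫_{ℝⁿ} ψ(y) |x − y|^{2−n} dy ‖_{L^{2n/(n−2)}_x(ℝⁿ)} ≤ C ‖⟨x⟩ψ‖_{L²(ℝⁿ)}. -/

import Mathlib

open MeasureTheory Complex FourierTransform
open scoped ENNReal Real

noncomputable section

/-!
The bound is the case `p = 2`, `α = 0`, `β = 1`, `γ = n - 2` of the Stein–Weiss inequality, with the
Japanese bracket weakened to `‖x‖`. To prove the latter from `L ^ p` to `L ^ q`, split the kernel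
acting on `‖y‖ ^ β * f y` as
`(‖x‖ ^ (-α) * ‖x - y‖ ^ (a - γ) * ‖y‖ ^ (b - β)) * (‖x - y‖ ^ (-a) * ‖y‖ ^ (-b))`.
By Hölder and Tonelli it suffices to bound the `p'`-integral of the second factor in `y`, and then a
weighted `q`-integral of the first factor in `x`. Both are convolutions of two powers of the norm,
which scaling reduces to a point of the unit sphere, and `α + β > 0` leaves room to choose `a` and
`b` so that they converge.
-/

open Module Real
open scoped NNReal

section Kernel

variable {E : Type*} [NormedAddCommGroup E]

lemma enorm_norm_rpow {x : E} (hx : x ≠ 0) (r : ℝ) : ‖‖x‖ ^ r‖ₑ = ‖x‖ₑ ^ r := by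
  rw [Real.enorm_of_nonneg (by positivity), ← ENNReal.ofReal_rpow_of_pos (norm_pos_iff.mpr hx),
    ofReal_norm]

lemma norm_rpow_neg_mul_le_of_norm_add_eq_one {s : ℝ} (hs : 0 ≤ s) (t : ℝ) {v w : E}
    (hvw : ‖v + w‖ = 1) (hle : ‖w‖ ≤ ‖v‖) :
    ‖v‖ ^ (-s) * ‖w‖ ^ (-t) ≤ 3 ^ s * ((1 + ‖w‖) ^ (-s) * ‖w‖ ^ (-t)) := by
  have hv : 1 + ‖w‖ ≤ 3 * ‖v‖ := by linarith [hvw ▸ norm_add_le v w]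
  calc ‖v‖ ^ (-s) * ‖w‖ ^ (-t) = 3 ^ s * ((3 * ‖v‖) ^ (-s) * ‖w‖ ^ (-t)) := by
        rw [mul_rpow (by norm_num) (norm_nonneg v), rpow_neg zero_le_three]
        field_simp
    _ ≤ 3 ^ s * ((1 + ‖w‖) ^ (-s) * ‖w‖ ^ (-t)) := by
        gcongr 3 ^ s * (?_ * ‖w‖ ^ (-t))
        exact rpow_le_rpow_of_nonpos (by positivity) hv (neg_nonpos.mpr hs)

variable [NormedSpace ℝ E] [FiniteDimensional ℝ E] [MeasurableSpace E] [BorelSpace E]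
  {μ : Measure E} [μ.IsAddHaarMeasure]

lemma integrable_one_add_norm_rpow_neg_mul_norm_rpow_neg [Nontrivial E] {s t : ℝ}
    (ht₀ : 0 ≤ t) (ht : t < finrank ℝ E) (hst : finrank ℝ E < s + t) :
    Integrable (fun y : E ↦ (1 + ‖y‖) ^ (-s) * ‖y‖ ^ (-t)) μ := by
  have hs : 0 ≤ s := by linarith
  have hmeas : AEStronglyMeasurable (fun y : E ↦ (1 + ‖y‖) ^ (-s) * ‖y‖ ^ (-t)) μ :=
    Measurable.aestronglyMeasurable (by fun_prop)
  have near : IntegrableOn (fun y : E ↦ (1 + ‖y‖) ^ (-s) * ‖y‖ ^ (-t)) (Metric.ball 0 1) μ := by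
    refine integrableOn_ball_of_norm_le_rpow (C := 1) finrank_pos ht (.of_forall fun y ↦ ?_) hmeas
    rw [norm_of_nonneg (by positivity)]
    gcongr
    exact rpow_le_one_of_one_le_of_nonpos (by linarith [norm_nonneg y]) (neg_nonpos.mpr hs)
  have far : IntegrableOn (fun y : E ↦ (1 + ‖y‖) ^ (-s) * ‖y‖ ^ (-t)) (Metric.ball 0 1)ᶜ μ := by
    refine ((integrable_one_add_norm hst).const_mul (2 ^ t)).integrableOn.mono' hmeas.restrict ?_
    filter_upwards [ae_restrict_mem measurableSet_ball.compl] with y hy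
    have hy₁ : 1 ≤ ‖y‖ := by simpa using hy
    rw [norm_of_nonneg (by positivity)]
    calc (1 + ‖y‖) ^ (-s) * ‖y‖ ^ (-t)
        ≤ (1 + ‖y‖) ^ (-s) * ((1 + ‖y‖) / 2) ^ (-t) := by
          gcongr _ * ?_
          exact rpow_le_rpow_of_nonpos (by positivity) (by linarith) (neg_nonpos.mpr ht₀)
      _ = 2 ^ t * (1 + ‖y‖) ^ (-(s + t)) := by
          rw [div_rpow (by positivity) (by norm_num), rpow_neg zero_le_two, neg_add,
            rpow_add (by positivity)]
          field_simp
  simpa only [Set.union_compl_self, integrableOn_univ] using near.union far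

lemma exists_lintegral_enorm_rpow_mul_le_of_norm_eq_one {s t : ℝ}
    (hs : s < finrank ℝ E) (ht : t < finrank ℝ E) (hst : finrank ℝ E < s + t) :
    ∃ C : ℝ≥0∞, C ≠ ⊤ ∧ ∀ x : E, ‖x‖ = 1 →
      ∫⁻ y, ‖x - y‖ₑ ^ (-s) * ‖y‖ₑ ^ (-t) ∂μ ≤ C := by
  have hs₀ : 0 ≤ s := by linarith
  have ht₀ : 0 ≤ t := by linarith
  have : Nontrivial E := finrank_pos_iff (R := ℝ).mp (by exact_mod_cast hs₀.trans_lt hs)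
  let F (s t : ℝ) (y : E) : ℝ := 3 ^ s * ((1 + ‖y‖) ^ (-s) * ‖y‖ ^ (-t))
  have hFs : Integrable (F s t) μ :=
    (integrable_one_add_norm_rpow_neg_mul_norm_rpow_neg ht₀ ht hst).const_mul _
  have hFt : Integrable (F t s) μ :=
    (integrable_one_add_norm_rpow_neg_mul_norm_rpow_neg hs₀ hs (by linarith)).const_mul _
  refine ⟨∫⁻ y, ‖F s t y‖ₑ ∂μ + ∫⁻ y, ‖F t s y‖ₑ ∂μ,
    ENNReal.add_ne_top.mpr ⟨hFs.2.ne, hFt.2.ne⟩, fun x hx ↦ ?_⟩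
  have kernel_le (y : E) :
      ‖x - y‖ ^ (-s) * ‖y‖ ^ (-t) ≤ F s t y + F t s (x - y) := by
    rcases le_total ‖y‖ ‖x - y‖ with h | h
    · exact le_add_of_le_of_nonneg
        (norm_rpow_neg_mul_le_of_norm_add_eq_one hs₀ t (by simpa using hx) h) (by positivity)
    · rw [mul_comm]
      exact le_add_of_nonneg_of_le (by positivity)
        (norm_rpow_neg_mul_le_of_norm_add_eq_one ht₀ s (by simpa using hx) h)
  calc ∫⁻ y, ‖x - y‖ₑ ^ (-s) * ‖y‖ₑ ^ (-t) ∂μ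
      ≤ ∫⁻ y, ‖F s t y‖ₑ + ‖F t s (x - y)‖ₑ ∂μ := by
        refine lintegral_mono_ae ?_
        filter_upwards [Measure.ae_ne μ 0, Measure.ae_ne μ x] with y hy₀ hyx
        rw [← enorm_norm_rpow hy₀, ← enorm_norm_rpow (sub_ne_zero.mpr hyx.symm), ← enorm_mul]
        refine le_trans ?_ (enorm_add_le _ _)
        exact enorm_le_iff_norm_le.mpr (abs_le_abs_of_nonneg (by positivity) (kernel_le y))
    _ = ∫⁻ y, ‖F s t y‖ₑ ∂μ + ∫⁻ y, ‖F t s y‖ₑ ∂μ := by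
        rw [lintegral_add_left' hFs.1.enorm, lintegral_sub_left_eq_self (fun y ↦ ‖F t s y‖ₑ) x]

lemma lintegral_comp_inv_smul (f : E → ℝ≥0∞) {r : ℝ} (hr : r ≠ 0) :
    ∫⁻ y, f (r⁻¹ • y) ∂μ = ‖r‖ₑ ^ finrank ℝ E * ∫⁻ y, f y ∂μ := by
  rw [← ofReal_norm, ← ENNReal.ofReal_pow (norm_nonneg r), Real.norm_eq_abs, ← abs_pow,
    ← smul_eq_mul, ← lintegral_smul_measure, ← inv_inv (r ^ _), ← inv_pow,
    ← Measure.map_addHaar_smul μ (inv_ne_zero hr)]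
  exact (lintegral_map_equiv f (Homeomorph.smulOfNeZero _ (inv_ne_zero hr)).toMeasurableEquiv).symm

lemma lintegral_enorm_smul_sub_rpow_mul_enorm_rpow (s t : ℝ) {r : ℝ} (hr : r ≠ 0) (u : E) :
    ∫⁻ y, ‖r • u - y‖ₑ ^ s * ‖y‖ₑ ^ t ∂μ =
      ‖r‖ₑ ^ (finrank ℝ E + s + t) * ∫⁻ y, ‖u - y‖ₑ ^ s * ‖y‖ₑ ^ t ∂μ := by
  have hr₀ : ‖r‖ₑ ≠ 0 := enorm_ne_zero.mpr hr
  have hsmul (v : E) (p : ℝ) : ‖r • v‖ₑ ^ p = ‖r‖ₑ ^ p * ‖v‖ₑ ^ p := by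
    rw [enorm_smul, ENNReal.mul_rpow_of_ne_top enorm_ne_top enorm_ne_top]
  calc ∫⁻ y, ‖r • u - y‖ₑ ^ s * ‖y‖ₑ ^ t ∂μ
      = ‖r‖ₑ ^ finrank ℝ E * ∫⁻ y, ‖r • u - r • y‖ₑ ^ s * ‖r • y‖ₑ ^ t ∂μ := by
        rw [← lintegral_comp_inv_smul _ hr]
        simp only [smul_inv_smul₀ hr]
    _ = ‖r‖ₑ ^ finrank ℝ E * ∫⁻ y, ‖r‖ₑ ^ (s + t) * (‖u - y‖ₑ ^ s * ‖y‖ₑ ^ t) ∂μ := by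
        congr! 3 with y
        rw [← smul_sub, hsmul, hsmul, ENNReal.rpow_add s t hr₀ enorm_ne_top]
        ring
    _ = ‖r‖ₑ ^ (finrank ℝ E + s + t) * ∫⁻ y, ‖u - y‖ₑ ^ s * ‖y‖ₑ ^ t ∂μ := by
        rw [lintegral_const_mul _ (by fun_prop), ← mul_assoc, ← ENNReal.rpow_natCast,
          ← ENNReal.rpow_add _ _ hr₀ enorm_ne_top, add_assoc]

lemma exists_lintegral_enorm_rpow_mul_le {s t : ℝ}
    (hs : s < finrank ℝ E) (ht : t < finrank ℝ E) (hst : finrank ℝ E < s + t) :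
    ∃ C : ℝ≥0∞, C ≠ ⊤ ∧ ∀ x : E, x ≠ 0 →
      ∫⁻ y, ‖x - y‖ₑ ^ (-s) * ‖y‖ₑ ^ (-t) ∂μ ≤ C * ‖x‖ₑ ^ (finrank ℝ E - s - t) := by
  obtain ⟨C, hC, hunit⟩ :=
    exists_lintegral_enorm_rpow_mul_le_of_norm_eq_one (μ := μ) hs ht hst
  refine ⟨C, hC, fun x hx ↦ ?_⟩
  have hx₀ : ‖x‖ ≠ 0 := norm_ne_zero_iff.mpr hx
  set u : E := ‖x‖⁻¹ • x
  have hu : ‖u‖ = 1 := by rw [norm_smul, norm_inv, norm_norm, inv_mul_cancel₀ hx₀]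
  calc ∫⁻ y, ‖x - y‖ₑ ^ (-s) * ‖y‖ₑ ^ (-t) ∂μ
      = ‖x‖ₑ ^ (finrank ℝ E - s - t) * ∫⁻ y, ‖u - y‖ₑ ^ (-s) * ‖y‖ₑ ^ (-t) ∂μ := by
        simpa only [u, smul_inv_smul₀ hx₀, enorm_norm, ← sub_eq_add_neg] using
          lintegral_enorm_smul_sub_rpow_mul_enorm_rpow (μ := μ) (-s) (-t) hx₀ u
    _ ≤ C * ‖x‖ₑ ^ (finrank ℝ E - s - t) := by
        rw [mul_comm]
        gcongr
        exact hunit u hu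

end Kernel

section SchurTest

variable {X Y : Type*} [MeasurableSpace X] [MeasurableSpace Y] {μ : Measure X} {ν : Measure Y}
  {p p' q : ℝ}

-- Hölder with exponents `q`, `(p⁻¹ - q⁻¹)⁻¹` and `p'`, whose inverses add up to `1`.
lemma lintegral_mul_mul_rpow_le (hp : p.HolderConjugate p') (hpq : p ≤ q)
    {a b f : Y → ℝ≥0∞} (ha : AEMeasurable a ν) (hb : AEMeasurable b ν) (hf : AEMeasurable f ν) :
    (∫⁻ y, a y * b y * f y ∂ν) ^ q ≤
      (∫⁻ y, f y ^ p ∂ν) ^ (q / p - 1) * (∫⁻ y, b y ^ p' ∂ν) ^ (q / p') *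
        ∫⁻ y, a y ^ q * f y ^ p ∂ν := by
  have hp₀ : 0 < p := hp.pos
  have hq₀ : 0 < q := hp₀.trans_le hpq
  have hpq' : 0 ≤ p⁻¹ - q⁻¹ := sub_nonneg.mpr (inv_anti₀ hp₀ hpq)
  have factor (y : Y) :
      (a y ^ q * f y ^ p) ^ q⁻¹ * (f y ^ p) ^ (p⁻¹ - q⁻¹) * (b y ^ p') ^ p'⁻¹ =
        a y * b y * f y := by
    rw [ENNReal.mul_rpow_of_nonneg _ _ (inv_nonneg.mpr hq₀.le), ENNReal.rpow_rpow_inv hq₀.ne',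
      ENNReal.rpow_rpow_inv hp.symm.ne_zero, mul_assoc (a y),
      ← ENNReal.rpow_add_of_nonneg _ _ (inv_nonneg.mpr hq₀.le) hpq', add_sub_cancel,
      ENNReal.rpow_rpow_inv hp₀.ne']
    ring
  have holder := ENNReal.lintegral_prod_norm_pow_le (μ := ν) (Finset.univ : Finset (Fin 3))
    (f := ![fun y ↦ a y ^ q * f y ^ p, fun y ↦ f y ^ p, fun y ↦ b y ^ p'])
    (p := ![q⁻¹, p⁻¹ - q⁻¹, p'⁻¹])
    (by simpa [Fin.forall_fin_succ] using
      ⟨(ha.pow_const q).mul (hf.pow_const p), hf.pow_const p, hb.pow_const p'⟩)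
    (by simp [Fin.sum_univ_three, hp.inv_add_inv_eq_one])
    (by simpa [Fin.forall_fin_succ, hq₀.le, hp.symm.nonneg] using hpq')
  simp only [Fin.prod_univ_three, Matrix.cons_val, factor] at holder
  refine (ENNReal.rpow_le_rpow holder hq₀.le).trans_eq ?_
  rw [ENNReal.mul_rpow_of_nonneg _ _ hq₀.le, ENNReal.mul_rpow_of_nonneg _ _ hq₀.le,
    ENNReal.rpow_inv_rpow hq₀.ne', ← ENNReal.rpow_mul, ← ENNReal.rpow_mul, sub_mul,
    inv_mul_cancel₀ hq₀.ne', inv_mul_eq_div, inv_mul_eq_div]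
  ring

theorem lintegral_rpow_lintegral_mul_mul_le [SFinite μ] [SFinite ν]
    (hp : p.HolderConjugate p') (hpq : p ≤ q) {A B : X → Y → ℝ≥0∞} {w : X → ℝ≥0∞} {C : ℝ≥0∞}
    (hA : Measurable (Function.uncurry A)) (hB : ∀ x, Measurable (B x)) (hw : Measurable w)
    (hBw : ∀ᵐ x ∂μ, ∫⁻ y, B x y ^ p' ∂ν ≤ w x)
    (hAC : ∀ᵐ y ∂ν, ∫⁻ x, w x ^ (q / p') * A x y ^ q ∂μ ≤ C)
    {f : Y → ℝ≥0∞} (hf : AEMeasurable f ν) :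
    ∫⁻ x, (∫⁻ y, A x y * B x y * f y ∂ν) ^ q ∂μ ≤ C * (∫⁻ y, f y ^ p ∂ν) ^ (q / p) := by
  have hp₀ : 0 < p := hp.pos
  have hqp₀ : 0 ≤ q / p - 1 := sub_nonneg.mpr ((one_le_div hp₀).mpr hpq)
  have hqp' : 0 ≤ q / p' := div_nonneg (hp₀.le.trans hpq) hp.symm.nonneg
  have hAx (x : X) : Measurable (A x) := hA.of_uncurry_left
  have hAy (y : Y) : Measurable (A · y) := hA.of_uncurry_right
  have hAf : AEMeasurable (fun z : X × Y ↦ w z.1 ^ (q / p') * (A z.1 z.2 ^ q * f z.2 ^ p))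
      (μ.prod ν) :=
    ((hw.comp measurable_fst).pow_const _).aemeasurable.mul
      ((hA.pow_const q).aemeasurable.mul (hf.pow_const p).comp_snd)
  set N : ℝ≥0∞ := ∫⁻ y, f y ^ p ∂ν
  have row_bound : ∀ᵐ x ∂μ, (∫⁻ y, A x y * B x y * f y ∂ν) ^ q ≤
      N ^ (q / p - 1) * ∫⁻ y, w x ^ (q / p') * (A x y ^ q * f y ^ p) ∂ν := by
    filter_upwards [hBw] with x hx
    rw [lintegral_const_mul'' _ (by fun_prop), ← mul_assoc]
    refine (lintegral_mul_mul_rpow_le hp hpq (hAx x).aemeasurable (hB x).aemeasurable hf).trans ?_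
    gcongr
  have column_bound : ∀ᵐ y ∂ν, ∫⁻ x, w x ^ (q / p') * (A x y ^ q * f y ^ p) ∂μ ≤ C * f y ^ p := by
    filter_upwards [hAC] with y hy
    simp only [← mul_assoc]
    rw [lintegral_mul_const _ (by fun_prop)]
    gcongr
  calc ∫⁻ x, (∫⁻ y, A x y * B x y * f y ∂ν) ^ q ∂μ
      ≤ ∫⁻ x, N ^ (q / p - 1) * ∫⁻ y, w x ^ (q / p') * (A x y ^ q * f y ^ p) ∂ν ∂μ :=
        lintegral_mono_ae row_bound
    _ = N ^ (q / p - 1) * ∫⁻ y, ∫⁻ x, w x ^ (q / p') * (A x y ^ q * f y ^ p) ∂μ ∂ν := by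
        rw [lintegral_const_mul'' _ hAf.lintegral_prod_right', lintegral_lintegral_swap hAf]
    _ ≤ N ^ (q / p - 1) * ∫⁻ y, C * f y ^ p ∂ν := by
        gcongr _ * ?_
        exact lintegral_mono_ae column_bound
    _ = C * (N ^ (q / p - 1) * N ^ (1 : ℝ)) := by
        rw [lintegral_const_mul'' _ (by fun_prop), ENNReal.rpow_one, mul_left_comm]
    _ = C * N ^ (q / p) := by
        rw [← ENNReal.rpow_add_of_nonneg _ _ hqp₀ zero_le_one, sub_add_cancel]

end SchurTest

section SteinWeiss

-- With `P = d / p'` and `Q = d / q`, the conditions say that both integrals of the Schur test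
-- converge at their two singularities and at infinity.
lemma exists_steinWeiss_splitting {P Q α β : ℝ} (hP : 0 < P) (hQ : 0 < Q) (hα : α < Q)
    (hβ : β < P) (hαβ : 0 < α + β) :
    ∃ a b : ℝ, a < P ∧ b < P ∧ P < a + b ∧ β < b ∧ P < a + α + β ∧ a + b + α < P + Q := by
  obtain ⟨b, hb₁, hb₂⟩ : ∃ b, max 0 β < b ∧ b < min P (Q + β) :=
    exists_between (by grind)
  obtain ⟨a, ha₁, ha₂⟩ : ∃ a, max (P - b) (P - α - β) < a ∧ a < min P (P + Q - α - b) :=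
    exists_between (by grind)
  exact ⟨a, b, by grind⟩

variable {E : Type*} [NormedAddCommGroup E]

lemma enorm_steinWeiss_kernel_eq {x y : E} (hy : y ≠ 0) (hyx : y ≠ x) (α β γ a b : ℝ)
    (r : ℝ≥0∞) :
    ‖x‖ₑ ^ (-α) * (‖x - y‖ₑ ^ (-γ) * r) =
      ‖x‖ₑ ^ (-α) * ‖x - y‖ₑ ^ (-(γ - a)) * ‖y‖ₑ ^ (b - β) *
        (‖x - y‖ₑ ^ (-a) * ‖y‖ₑ ^ (-b)) * (‖y‖ₑ ^ β * r) := by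
  have hy₀ : ‖y‖ₑ ≠ 0 := enorm_ne_zero.mpr hy
  have hxy₀ : ‖x - y‖ₑ ≠ 0 := enorm_ne_zero.mpr (sub_ne_zero.mpr hyx.symm)
  have hweight : ‖y‖ₑ ^ (b - β) * ‖y‖ₑ ^ (-b) * ‖y‖ₑ ^ β = 1 := by
    rw [← ENNReal.rpow_add _ _ hy₀ enorm_ne_top, ← ENNReal.rpow_add _ _ hy₀ enorm_ne_top,
      show b - β + -b + β = 0 by ring, ENNReal.rpow_zero]
  calc ‖x‖ₑ ^ (-α) * (‖x - y‖ₑ ^ (-γ) * r)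
      = ‖x‖ₑ ^ (-α) * (‖x - y‖ₑ ^ (-(γ - a)) * ‖x - y‖ₑ ^ (-a) * r) *
          (‖y‖ₑ ^ (b - β) * ‖y‖ₑ ^ (-b) * ‖y‖ₑ ^ β) := by
        rw [hweight, mul_one, ← ENNReal.rpow_add _ _ hxy₀ enorm_ne_top, neg_sub, sub_add_eq_add_sub,
          add_neg_cancel, zero_sub]
    _ = _ := by ring

lemma enorm_steinWeiss_column_eq {x : E} (hx : x ≠ 0) (y : E) {p' q : ℝ} (hp' : 0 < p')
    (hq : 0 < q) (d α β γ a b : ℝ) (C : ℝ≥0∞) :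
    (C * ‖x‖ₑ ^ (d - a * p' - b * p')) ^ (q / p') *
        (‖x‖ₑ ^ (-α) * ‖x - y‖ₑ ^ (-(γ - a)) * ‖y‖ₑ ^ (b - β)) ^ q =
      C ^ (q / p') * ‖y‖ₑ ^ ((b - β) * q) *
        (‖y - x‖ₑ ^ (-((γ - a) * q)) * ‖x‖ₑ ^ (-((a + b + α - d / p') * q))) := by
  have hx_exponent : -((a + b + α - d / p') * q) =
      (d - a * p' - b * p') * (q / p') + -α * q := by
    field_simp
    ring
  rw [hx_exponent, ENNReal.rpow_add _ _ (enorm_ne_zero.mpr hx) enorm_ne_top, enorm_sub_rev y x]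
  simp only [ENNReal.mul_rpow_of_nonneg _ _ (div_pos hq hp').le,
    ENNReal.mul_rpow_of_nonneg _ _ hq.le, ← ENNReal.rpow_mul, neg_mul]
  ring

lemma nontrivial_of_pos_add_of_lt_finrank_div [NormedSpace ℝ E] {p' q α β : ℝ}
    (hα : α < finrank ℝ E / q) (hβ : β < finrank ℝ E / p') (hαβ : 0 < α + β) :
    Nontrivial E := by
  by_contra hE
  have : Subsingleton E := not_nontrivial_iff_subsingleton.mp hE
  simp only [finrank_zero_of_subsingleton, Nat.cast_zero, zero_div] at hα hβ
  linarith

variable [NormedSpace ℝ E] [FiniteDimensional ℝ E] [MeasurableSpace E] [BorelSpace E]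
  {μ : Measure E} [μ.IsAddHaarMeasure] {p p' q α β γ : ℝ}

lemma exists_steinWeiss_schur_bounds [Nontrivial E] (hp' : 0 < p') (hq : 0 < q)
    (hα : α < finrank ℝ E / q) (hβ : β < finrank ℝ E / p') (hαβ : 0 < α + β)
    (hγ : α + β + γ = finrank ℝ E / p' + finrank ℝ E / q) :
    ∃ (a b : ℝ) (w : E → ℝ≥0∞) (C : ℝ≥0∞), Measurable w ∧ C ≠ ⊤ ∧
      (∀ x ≠ 0, ∫⁻ y, (‖x - y‖ₑ ^ (-a) * ‖y‖ₑ ^ (-b)) ^ p' ∂μ ≤ w x) ∧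
      ∀ y ≠ 0, ∫⁻ x, w x ^ (q / p') *
        (‖x‖ₑ ^ (-α) * ‖x - y‖ₑ ^ (-(γ - a)) * ‖y‖ₑ ^ (b - β)) ^ q ∂μ ≤ C := by
  have hd : 0 < (finrank ℝ E : ℝ) := by exact_mod_cast finrank_pos
  obtain ⟨a, b, ha, hb, hab, hβb, haγ, habα⟩ :=
    exists_steinWeiss_splitting (div_pos hd hp') (div_pos hd hq) hα hβ hαβ
  obtain ⟨C₁, hC₁, row⟩ := exists_lintegral_enorm_rpow_mul_le (μ := μ) (s := a * p') (t := b * p')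
    (by rwa [← lt_div_iff₀ hp']) (by rwa [← lt_div_iff₀ hp'])
    (by rwa [← add_mul, ← div_lt_iff₀ hp'])
  obtain ⟨C₂, hC₂, column⟩ := exists_lintegral_enorm_rpow_mul_le (μ := μ)
    (s := (γ - a) * q) (t := (a + b + α - finrank ℝ E / p') * q)
    (by rw [← lt_div_iff₀ hq]; linarith) (by rw [← lt_div_iff₀ hq]; linarith)
    (by rw [← add_mul, ← div_lt_iff₀ hq]; linarith)
  refine ⟨a, b, fun x ↦ C₁ * ‖x‖ₑ ^ (finrank ℝ E - a * p' - b * p'), C₁ ^ (q / p') * C₂,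
    by fun_prop, ENNReal.mul_ne_top (ENNReal.rpow_ne_top_of_nonneg (by positivity) hC₁) hC₂,
    fun x hx ↦ ?_, fun y hy ↦ ?_⟩
  · simpa only [ENNReal.mul_rpow_of_nonneg _ _ hp'.le, ← ENNReal.rpow_mul, neg_mul] using row x hx
  have cancel : (b - β) * q + (finrank ℝ E - (γ - a) * q -
      (a + b + α - finrank ℝ E / p') * q) = 0 := by
    have hscale : (α + β + γ) * q = (finrank ℝ E / p' + finrank ℝ E / q) * q := by rw [hγ]
    rw [add_mul (_ / p'), div_mul_cancel₀ _ hq.ne'] at hscale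
    linarith
  calc ∫⁻ x, (C₁ * ‖x‖ₑ ^ (finrank ℝ E - a * p' - b * p')) ^ (q / p') *
        (‖x‖ₑ ^ (-α) * ‖x - y‖ₑ ^ (-(γ - a)) * ‖y‖ₑ ^ (b - β)) ^ q ∂μ
      = C₁ ^ (q / p') * ‖y‖ₑ ^ ((b - β) * q) * ∫⁻ x, ‖y - x‖ₑ ^ (-((γ - a) * q)) *
          ‖x‖ₑ ^ (-((a + b + α - finrank ℝ E / p') * q)) ∂μ := by
        rw [← lintegral_const_mul _ (by fun_prop)]
        refine lintegral_congr_ae ?_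
        filter_upwards [Measure.ae_ne μ 0] with x hx
        exact enorm_steinWeiss_column_eq hx y hp' hq _ α β γ a b C₁
    _ ≤ C₁ ^ (q / p') * ‖y‖ₑ ^ ((b - β) * q) * (C₂ * ‖y‖ₑ ^ (finrank ℝ E - (γ - a) * q -
          (a + b + α - finrank ℝ E / p') * q)) := by
        gcongr
        exact column y hy
    _ = C₁ ^ (q / p') * C₂ := by
        rw [mul_comm C₂, mul_assoc, ← mul_assoc (‖y‖ₑ ^ _),
          ← ENNReal.rpow_add _ _ (enorm_ne_zero.mpr hy) enorm_ne_top, cancel, ENNReal.rpow_zero,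
          one_mul]

theorem exists_lintegral_steinWeiss_le (hp : p.HolderConjugate p') (hpq : p ≤ q)
    (hα : α < finrank ℝ E / q) (hβ : β < finrank ℝ E / p') (hαβ : 0 < α + β)
    (hγ : α + β + γ = finrank ℝ E / p' + finrank ℝ E / q) :
    ∃ C : ℝ≥0∞, C ≠ ⊤ ∧ ∀ f : E → ℝ≥0∞, AEMeasurable f μ →
      ∫⁻ x, (‖x‖ₑ ^ (-α) * ∫⁻ y, ‖x - y‖ₑ ^ (-γ) * f y ∂μ) ^ q ∂μ ≤
        C * (∫⁻ y, (‖y‖ₑ ^ β * f y) ^ p ∂μ) ^ (q / p) := by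
  have : Nontrivial E := nontrivial_of_pos_add_of_lt_finrank_div hα hβ hαβ
  obtain ⟨a, b, w, C, hw, hC, row, column⟩ := exists_steinWeiss_schur_bounds (μ := μ)
    hp.symm.pos (hp.pos.trans_le hpq) hα hβ hαβ hγ
  refine ⟨C, hC, fun f hf ↦ ?_⟩
  have ae_ne_zero : ∀ᵐ x ∂μ, x ≠ 0 := Measure.ae_ne μ 0
  have schur := lintegral_rpow_lintegral_mul_mul_le hp hpq
    (A := fun x y ↦ ‖x‖ₑ ^ (-α) * ‖x - y‖ₑ ^ (-(γ - a)) * ‖y‖ₑ ^ (b - β))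
    (B := fun x y ↦ ‖x - y‖ₑ ^ (-a) * ‖y‖ₑ ^ (-b)) (f := fun y ↦ ‖y‖ₑ ^ β * f y)
    (by fun_prop) (by fun_prop) hw (ae_ne_zero.mono row) (ae_ne_zero.mono column) (by fun_prop)
  refine le_of_eq_of_le (lintegral_congr_ae ?_) schur
  filter_upwards [ae_ne_zero] with x hx
  rw [← lintegral_const_mul' _ _
    (ENNReal.rpow_ne_top_of_ne_zero (enorm_ne_zero.mpr hx) enorm_ne_top)]
  congr 1
  refine lintegral_congr_ae ?_
  filter_upwards [ae_ne_zero, Measure.ae_ne μ x] with y hy hyx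
  exact enorm_steinWeiss_kernel_eq hy hyx α β γ a b (f y)

lemma exists_eLpNorm_enorm_steinWeiss_le (hp : p.HolderConjugate p') (hpq : p ≤ q)
    (hα : α < finrank ℝ E / q) (hβ : β < finrank ℝ E / p') (hαβ : 0 < α + β)
    (hγ : α + β + γ = finrank ℝ E / p' + finrank ℝ E / q) :
    ∃ C : ℝ≥0, ∀ f : E → ℝ≥0∞, AEMeasurable f μ →
      eLpNorm (fun x ↦ ‖x‖ₑ ^ (-α) * ∫⁻ y, ‖x - y‖ₑ ^ (-γ) * f y ∂μ) (ENNReal.ofReal q) μ ≤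
        C * eLpNorm (fun y ↦ ‖y‖ₑ ^ β * f y) (ENNReal.ofReal p) μ := by
  have hp₀ : 0 < p := hp.pos
  have hq₀ : 0 < q := hp₀.trans_le hpq
  obtain ⟨C, hC, bound⟩ := exists_lintegral_steinWeiss_le (μ := μ) hp hpq hα hβ hαβ hγ
  lift C ^ q⁻¹ to ℝ≥0 using ENNReal.rpow_ne_top_of_nonneg (inv_nonneg.mpr hq₀.le) hC
    with K hK
  refine ⟨K, fun f hf ↦ ?_⟩
  simp only [eLpNorm_eq_lintegral_rpow_enorm_toReal (ENNReal.ofReal_pos.mpr hq₀).ne'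
    ENNReal.ofReal_ne_top, eLpNorm_eq_lintegral_rpow_enorm_toReal (ENNReal.ofReal_pos.mpr hp₀).ne'
    ENNReal.ofReal_ne_top, ENNReal.toReal_ofReal hq₀.le, ENNReal.toReal_ofReal hp₀.le,
    enorm_eq_self, one_div]
  refine (ENNReal.rpow_le_rpow (bound f hf) (inv_nonneg.mpr hq₀.le)).trans_eq ?_
  rw [ENNReal.mul_rpow_of_nonneg _ _ (inv_nonneg.mpr hq₀.le), ← ENNReal.rpow_mul, ← hK,
    div_mul_eq_mul_div, mul_inv_cancel₀ hq₀.ne', one_div]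

theorem exists_eLpNorm_steinWeiss_le {F : Type*} [NormedAddCommGroup F] [NormedSpace ℝ F]
    (hp : p.HolderConjugate p') (hpq : p ≤ q)
    (hα : α < finrank ℝ E / q) (hβ : β < finrank ℝ E / p') (hαβ : 0 < α + β)
    (hγ : α + β + γ = finrank ℝ E / p' + finrank ℝ E / q) :
    ∃ C : ℝ≥0, ∀ ψ : E → F, AEStronglyMeasurable ψ μ →
      eLpNorm (fun x ↦ ‖x‖ ^ (-α) • ∫ y, ‖x - y‖ ^ (-γ) • ψ y ∂μ) (ENNReal.ofReal q) μ ≤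
        C * eLpNorm (fun y ↦ ‖y‖ ^ β • ψ y) (ENNReal.ofReal p) μ := by
  have : Nontrivial E := nontrivial_of_pos_add_of_lt_finrank_div hα hβ hαβ
  obtain ⟨C, bound⟩ := exists_eLpNorm_enorm_steinWeiss_le (μ := μ) hp hpq hα hβ hαβ hγ
  refine ⟨C, fun ψ hψ ↦ ?_⟩
  have ae_ne_zero : ∀ᵐ x ∂μ, x ≠ 0 := Measure.ae_ne μ 0
  have potential_le : ∀ᵐ x ∂μ, ‖‖x‖ ^ (-α) • ∫ y, ‖x - y‖ ^ (-γ) • ψ y ∂μ‖ₑ ≤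
      ‖‖x‖ₑ ^ (-α) * ∫⁻ y, ‖x - y‖ₑ ^ (-γ) * ‖ψ y‖ₑ ∂μ‖ₑ := by
    filter_upwards [ae_ne_zero] with x hx
    rw [enorm_smul, enorm_norm_rpow hx, enorm_eq_self]
    gcongr
    refine (enorm_integral_le_lintegral_enorm _).trans_eq (lintegral_congr_ae ?_)
    filter_upwards [Measure.ae_ne μ x] with y hyx
    rw [enorm_smul, enorm_norm_rpow (sub_ne_zero.mpr hyx.symm)]
  have weight_eq : ∀ᵐ y ∂μ, ‖‖y‖ₑ ^ β * ‖ψ y‖ₑ‖ₑ = ‖‖y‖ ^ β • ψ y‖ₑ := by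
    filter_upwards [ae_ne_zero] with y hy
    rw [enorm_smul, enorm_norm_rpow hy, enorm_eq_self]
  calc eLpNorm (fun x ↦ ‖x‖ ^ (-α) • ∫ y, ‖x - y‖ ^ (-γ) • ψ y ∂μ) (ENNReal.ofReal q) μ
      ≤ eLpNorm (fun x ↦ ‖x‖ₑ ^ (-α) * ∫⁻ y, ‖x - y‖ₑ ^ (-γ) * ‖ψ y‖ₑ ∂μ)
          (ENNReal.ofReal q) μ := eLpNorm_mono_enorm_ae potential_le
    _ ≤ C * eLpNorm (fun y ↦ ‖y‖ₑ ^ β * ‖ψ y‖ₑ) (ENNReal.ofReal p) μ := bound _ hψ.enorm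
    _ = C * eLpNorm (fun y ↦ ‖y‖ ^ β • ψ y) (ENNReal.ofReal p) μ := by
        rw [eLpNorm_congr_enorm_ae weight_eq]

end SteinWeiss

section RieszKernel

variable {E F : Type*} [NormedAddCommGroup E] [MeasurableSpace E] [NormedAddCommGroup F]
  [NormedSpace ℝ F] {μ : Measure E}

lemma eLpNorm_norm_smul_two_le {ψ : E → F}
    (hψ : Integrable (fun x ↦ (1 + ‖x‖ ^ 2) * ‖ψ x‖ ^ 2) μ) :
    eLpNorm (fun x ↦ ‖x‖ • ψ x) 2 μ ≤
      ENNReal.ofReal √(∫ x, (1 + ‖x‖ ^ 2) * ‖ψ x‖ ^ 2 ∂μ) := by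
  have weight_le (x : E) : ‖‖x‖ • ψ x‖ₑ ^ (2 : ℝ) ≤
      ENNReal.ofReal ((1 + ‖x‖ ^ 2) * ‖ψ x‖ ^ 2) := by
    rw [← ofReal_norm, ENNReal.rpow_two, ← ENNReal.ofReal_pow (norm_nonneg _), norm_smul,
      norm_norm, mul_pow]
    gcongr
    exact le_add_of_nonneg_left zero_le_one
  rw [eLpNorm_eq_lintegral_rpow_enorm_toReal two_ne_zero ENNReal.ofNat_ne_top, ENNReal.toReal_ofNat,
    sqrt_eq_rpow, ← ENNReal.ofReal_rpow_of_nonneg (integral_nonneg fun x ↦ by positivity)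
      one_half_pos.le,
    ofReal_integral_eq_lintegral_ofReal hψ (.of_forall fun x ↦ by positivity)]
  gcongr
  exact weight_le _

variable [NormedSpace ℝ E] [FiniteDimensional ℝ E] [BorelSpace E]

lemma integrable_one_add_norm_sq_mul_norm_sq [μ.HasTemperateGrowth] (ψ : SchwartzMap E F) :
    Integrable (fun x ↦ (1 + ‖x‖ ^ 2) * ‖ψ x‖ ^ 2) μ := by
  obtain ⟨C, -, hC⟩ := ψ.decay 0 0
  have hψ : ∀ x, ‖ψ x‖ ≤ C := by simpa using hC
  have hmeas : AEStronglyMeasurable (fun x ↦ (1 + ‖x‖ ^ 2) * ‖ψ x‖ ^ 2) μ :=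
    Continuous.aestronglyMeasurable (by have := ψ.continuous; fun_prop)
  refine (((ψ.integrable_pow_mul μ 0).add (ψ.integrable_pow_mul μ 2)).mul_const C).mono' hmeas
    (.of_forall fun x ↦ ?_)
  rw [norm_of_nonneg (by positivity)]
  calc (1 + ‖x‖ ^ 2) * ‖ψ x‖ ^ 2 = (‖x‖ ^ 0 * ‖ψ x‖ + ‖x‖ ^ 2 * ‖ψ x‖) * ‖ψ x‖ := by ring
    _ ≤ (‖x‖ ^ 0 * ‖ψ x‖ + ‖x‖ ^ 2 * ‖ψ x‖) * C := by gcongr; exact hψ x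

theorem riesz_kernel_weighted_bound_general [μ.IsAddHaarMeasure] [CompleteSpace F]
    (hd : 3 ≤ finrank ℝ E) :
    ∃ C : ℝ≥0, ∀ ψ : E → F, AEStronglyMeasurable ψ μ →
      eLpNorm (fun x ↦ ∫ y, ‖x - y‖ ^ ((2 : ℝ) - finrank ℝ E) • ψ y ∂μ)
          (ENNReal.ofReal (2 * finrank ℝ E / (finrank ℝ E - 2))) μ ≤
        C * eLpNorm (fun x ↦ ‖x‖ • ψ x) 2 μ := by
  have hd₃ : (3 : ℝ) ≤ finrank ℝ E := by exact_mod_cast hd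
  have hd₂ : (0 : ℝ) < finrank ℝ E - 2 := by linarith
  have hdq : (finrank ℝ E : ℝ) / (2 * finrank ℝ E / (finrank ℝ E - 2)) =
      (finrank ℝ E - 2) / 2 := by field_simp
  simpa using exists_eLpNorm_steinWeiss_le (μ := μ) (F := F) (p := 2) (p' := 2)
    (q := 2 * finrank ℝ E / (finrank ℝ E - 2)) (α := 0) (β := 1) (γ := finrank ℝ E - 2)
    HolderConjugate.two_two (by rw [le_div_iff₀ hd₂]; linarith) (by rw [hdq]; linarith)
    (by linarith) (by norm_num) (by rw [hdq]; ring)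

end RieszKernel

/-- Convolution with the Riesz kernel `|x|^{2-n}` maps the weighted
space `⟨x⟩⁻¹L²` into `L^{2n/(n-2)}`. -/
theorem riesz_kernel_weighted_bound (n : ℕ) (hn : 3 ≤ n) :
    ∃ C : ℝ, 0 < C ∧ ∀ ψ : SchwartzMap (EuclideanSpace ℝ (Fin n)) ℂ,
      eLpNorm (fun x : EuclideanSpace ℝ (Fin n) =>
          ∫ y : EuclideanSpace ℝ (Fin n), ψ y * ((‖x - y‖ ^ ((2 : ℝ) - n) : ℝ) : ℂ))
        (ENNReal.ofReal (2 * (n : ℝ) / ((n : ℝ) - 2))) volume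
      ≤ ENNReal.ofReal (C * Real.sqrt (∫ x : EuclideanSpace ℝ (Fin n),
          (1 + ‖x‖ ^ 2) * ‖ψ x‖ ^ 2)) := by
  obtain ⟨C, bound⟩ := riesz_kernel_weighted_bound_general (E := EuclideanSpace ℝ (Fin n)) (F := ℂ)
    (μ := volume) (by simpa using hn)
  simp only [finrank_euclideanSpace, Fintype.card_fin] at bound
  refine ⟨C + 1, by positivity, fun ψ ↦ ?_⟩
  have hC : (C : ℝ≥0∞) ≤ ENNReal.ofReal (C + 1) := by
    rw [← ENNReal.ofReal_coe_nnreal]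
    exact ENNReal.ofReal_le_ofReal (by linarith)
  simp only [mul_comm (ψ _), ← real_smul]
  rw [ENNReal.ofReal_mul (by positivity)]
  exact (bound ψ ψ.continuous.aestronglyMeasurable).trans
    (mul_le_mul' hC (eLpNorm_norm_smul_two_le (integrable_one_add_norm_sq_mul_norm_sq ψ)))
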